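/- Every Christoffel word containing both letters is obtained from the word ab by finitely many applications of the substitutions α and β: for all coprime natural numbers p ≥ 1 and q ≥ 1, there exists a finite sequence of the substitutions α (replace every a by ab) and β (replace every b by ab) whose composition applied to the word ab equals the Christoffel word of slope q/p. Equivalently, there exists a finite binary sequence s such that, writing co(s) = (u,v), the concatenation u·v is the Christoffel word of slope q/p. -/

import Mathlib

/-!
The letters of the Christoffel word of slope `q / p` are the moves of a rotation automaton on
`{0, …, p + q - 1}` started at `0`: from the state `r = i·q mod (p + q)` it writes `a` and goes to
`r + q` when `r < p`, and writes `b` and goes to `r - p` otherwise (`christoffel_eq_run`).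

In this form the substitutions are changes of parameters that leave the state alone. Replacing
`(p, q)` by `(p, p + q)`, the state `r < p` emits `ab` and ends in `r + q`, while `r ≥ p` emits `b`
and ends in `r - p`: this is `α`. Replacing it by `(p + q, q)` gives `β` in the same way. Since the
Christoffel word has exactly `p` letters `a` (`count_run`), the lengths match, so `α` and `β` send
the word of slope `q / p` to those of slope `(p + q) / p` and `q / (p + q)`. The theorem follows
by running the subtractive Euclidean algorithm on `(p, q)`, which ends at `(1, 1)`, where the
word is `ab`.
-/

/-- The lower Christoffel word of slope `q / p`: the word of length `p + q`
whose `i`-th letter (for `1 ≤ i ≤ p + q`) is `a` (encoded `false`) if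
`⌊i·q/(p+q)⌋ = ⌊(i−1)·q/(p+q)⌋` and `b` (encoded `true`) otherwise. -/
def christoffel (p q : ℕ) : List Bool :=
  (List.range (p + q)).map (fun i => decide (((i + 1) * q) / (p + q) ≠ (i * q) / (p + q)))

/-- A word is a Christoffel word if it is the lower Christoffel word of slope
`q / p` for some coprime pair `(p, q) ≠ (0, 0)`. -/
def IsChristoffel (w : List Bool) : Prop :=
  ∃ p q : ℕ, Nat.Coprime p q ∧ (p, q) ≠ (0, 0) ∧ w = christoffel p q

/-- The substitution replacing every occurrence of the letter `a` (encoded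
`false`) by the two-letter word `ab` (encoded `[false, true]`), leaving `b`
unchanged. -/
def alpha : List Bool → List Bool
  | [] => []
  | c :: w => (if c then [true] else [false, true]) ++ alpha w

/-- The substitution replacing every occurrence of the letter `b` (encoded
`true`) by the two-letter word `ab` (encoded `[false, true]`), leaving `a`
unchanged. -/
def beta : List Bool → List Bool
  | [] => []
  | c :: w => (if c then [false, true] else [false]) ++ beta w

def coStep : (List Bool × List Bool) → Bool → (List Bool × List Bool)
  | (u, v), false => (beta u, beta v)
  | (u, v), true => (alpha u, alpha v)

/-- The Cohn tree: `co [] = (a, b)`, and if `co s = (u,v)` then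
`co (s ++ [false]) = (β u, β v)` and `co (s ++ [true]) = (α u, α v)`. -/
def co (s : List Bool) : List Bool × List Bool := s.foldl coStep ([false], [true])

/-- The word of length `n` written by the rotation automaton of parameters `p`, `q` started in the
state `r`: a state `r < p` writes `a` and moves to `r + q`, a state `r ≥ p` writes `b` and moves to
`r - p`. -/
def run (p q : ℕ) : ℕ → ℕ → List Bool
  | 0, _ => []
  | n + 1, r => if r < p then false :: run p q n (r + q) else true :: run p q n (r - p)

theorem length_run (p q n r : ℕ) : (run p q n r).length = n := by
  induction n generalizing r with
  | zero => rfl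
  | succ n ih => rw [run]; split <;> simp [ih]

/-- From index `j` on, the letters of the Christoffel word are those written by the automaton
started in the state `j·q mod (p + q)`. -/
theorem map_range_eq_run (p q : ℕ) (h : 0 < p + q) (m j : ℕ) :
    (List.range m).map (fun i => decide (((j + i + 1) * q) / (p + q) ≠ ((j + i) * q) / (p + q)))
      = run p q m (j * q % (p + q)) := by
  induction m generalizing j with
  | zero => rfl
  | succ m ih =>
    have ih' := ih (j + 1)
    rw [List.range_succ_eq_map, List.map_cons, List.map_map, run]
    have key : (List.range m).map ((fun i =>
        decide (((j + i + 1) * q) / (p + q) ≠ ((j + i) * q) / (p + q))) ∘ Nat.succ)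
          = run p q m ((j + 1) * q % (p + q)) := by
      rw [← ih']
      apply List.map_congr_left
      intro i _
      simp only [Function.comp, Nat.succ_eq_add_one]
      rw [show j + (i + 1) = j + 1 + i by omega]
    rw [key]
    simp only [Nat.add_zero]
    have hd := Nat.div_add_mod (j * q) (p + q)
    have hlt := Nat.mod_lt (j * q) h
    set d := j * q / (p + q)
    set r := j * q % (p + q)
    have hj : (j + 1) * q = (r + q) + (p + q) * d := by rw [add_mul]; omega
    rw [hj, Nat.add_mul_div_left _ _ h, Nat.add_mul_mod_self_left]
    split
    · rw [Nat.div_eq_of_lt (by omega), Nat.mod_eq_of_lt (by omega)]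
      simp [d]
    · have e : r + q = (r - p) + (p + q) := by omega
      rw [e, Nat.add_div_right _ h, Nat.add_mod_right, Nat.div_eq_of_lt (by omega),
        Nat.mod_eq_of_lt (by omega)]
      simp [d]

theorem christoffel_eq_run (p q : ℕ) (h : 0 < p + q) :
    christoffel p q = run p q (p + q) 0 := by
  simpa [christoffel] using map_range_eq_run p q h (p + q) 0

/-- Each `a` adds `q` to the state and each `b` subtracts `p`; `r'` is the state reached. -/
theorem count_run_aux (p q n r : ℕ) (hr : r < p + q) :
    ∃ r' < p + q, (p + q) * (run p q n r).count false + r = p * n + r' := by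
  induction n generalizing r with
  | zero => exact ⟨r, hr, by simp [run]⟩
  | succ n ih =>
    rw [run]
    split
    · obtain ⟨r', h1, h2⟩ := ih (r + q) (by omega)
      refine ⟨r', h1, ?_⟩
      rw [List.count_cons_self]
      linarith
    · obtain ⟨r', h1, h2⟩ := ih (r - p) (by omega)
      refine ⟨r', h1, ?_⟩
      rw [List.count_cons_of_ne (by simp), mul_add]
      omega

theorem count_run (p q : ℕ) (h : 0 < p + q) :
    (run p q (p + q) 0).count false = p := by
  obtain ⟨r', h1, h2⟩ := count_run_aux p q (p + q) 0 h
  have h3 : (p + q) * (run p q (p + q) 0).count false / (p + q) = p := by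
    rw [← add_zero ((p + q) * _), h2, mul_comm, Nat.mul_add_div h, Nat.div_eq_of_lt h1, add_zero]
  rwa [Nat.mul_div_cancel_left _ h] at h3

theorem alpha_run (p q n r : ℕ) :
    alpha (run p q n r) = run p (p + q) (n + (run p q n r).count false) r := by
  induction n generalizing r with
  | zero => rfl
  | succ n ih =>
    rw [run]
    split
    · next h =>
      rw [List.count_cons_self, alpha, ih,
        show n + 1 + (List.count false (run p q n (r + q)) + 1)
          = n + List.count false (run p q n (r + q)) + 1 + 1 by omega, run, if_pos h, run,
        if_neg (show ¬ r + (p + q) < p by omega), show r + (p + q) - p = r + q by omega]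
      rfl
    · next h =>
      rw [List.count_cons_of_ne (by simp), alpha, ih,
        show ∀ c, n + 1 + c = n + c + 1 by omega, run, if_neg h]
      rfl

theorem beta_run (p q n r : ℕ) (hr : r < p + q) :
    beta (run p q n r) = run (p + q) q (n + (run p q n r).count true) r := by
  induction n generalizing r with
  | zero => rfl
  | succ n ih =>
    rw [run]
    split
    · next h =>
      rw [List.count_cons_of_ne (by simp), beta, ih _ (by omega),
        show ∀ c, n + 1 + c = n + c + 1 by omega, run, if_pos hr]
      rfl
    · next h =>
      rw [List.count_cons_self, beta, ih _ (by omega),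
        show ∀ c, n + 1 + (c + 1) = n + c + 1 + 1 by omega, run, if_pos hr, run,
        if_neg (show ¬ r + q < p + q by omega), show r + q - (p + q) = r - p by omega]
      rfl

theorem alpha_christoffel (p q : ℕ) (h : 0 < p + q) :
    alpha (christoffel p q) = christoffel p (p + q) := by
  rw [christoffel_eq_run p q h, alpha_run, count_run p q h, christoffel_eq_run _ _ (by omega),
    show p + q + p = p + (p + q) by omega]

theorem beta_christoffel (p q : ℕ) (h : 0 < p + q) :
    beta (christoffel p q) = christoffel (p + q) q := by
  have hc : (run p q (p + q) 0).count true = q := by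
    have h1 := List.count_false_add_count_true (run p q (p + q) 0)
    rw [count_run p q h, length_run] at h1
    omega
  rw [christoffel_eq_run p q h, beta_run _ _ _ _ h, hc, christoffel_eq_run _ _ (by omega)]

theorem alpha_append (u v : List Bool) : alpha (u ++ v) = alpha u ++ alpha v := by
  induction u with
  | nil => rfl
  | cons c u ih => rw [List.cons_append, alpha, ih, alpha, List.append_assoc]

theorem beta_append (u v : List Bool) : beta (u ++ v) = beta u ++ beta v := by
  induction u with
  | nil => rfl
  | cons c u ih => rw [List.cons_append, beta, ih, beta, List.append_assoc]

theorem co_concat (s : List Bool) (c : Bool) : co (s ++ [c]) = coStep (co s) c := by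
  simp [co]

/-- Every Christoffel word containing both letters is obtained from `ab` by
finitely many applications of the substitutions `α` and `β`: for all coprime
`p ≥ 1` and `q ≥ 1` there is a vertex `(u, v)` of the Cohn tree with `u ++ v`
equal to the Christoffel word of slope `q / p`. -/
theorem christoffel_from_cohnTree :
    ∀ p q : ℕ, 1 ≤ p → 1 ≤ q → Nat.Coprime p q →
      ∃ s : List Bool, ∃ u v : List Bool, co s = (u, v) ∧ u ++ v = christoffel p q := by
  intro p q
  induction hn : p + q using Nat.strong_induction_on generalizing p q with
  | _ n ih =>
    intro hp hq hpq
    rcases lt_trichotomy p q with hlt | rfl | hlt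
    · obtain ⟨d, rfl⟩ := Nat.exists_eq_add_of_lt hlt
      rw [add_assoc] at hpq ⊢
      obtain ⟨s, u, v, hs, huv⟩ := ih (p + (d + 1)) (by omega) p (d + 1) rfl hp (by omega)
        (Nat.coprime_self_add_right.mp hpq)
      refine ⟨s ++ [true], alpha u, alpha v, by rw [co_concat, hs]; rfl, ?_⟩
      rw [← alpha_append, huv, alpha_christoffel _ _ (by omega)]
    · obtain rfl : p = 1 := (Nat.coprime_self p).mp hpq
      exact ⟨[], [false], [true], rfl, by decide⟩
    · obtain ⟨d, rfl⟩ := Nat.exists_eq_add_of_lt hlt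
      rw [add_assoc, add_comm q] at hpq ⊢
      obtain ⟨s, u, v, hs, huv⟩ := ih (d + 1 + q) (by omega) (d + 1) q rfl (by omega) hq
        (Nat.coprime_add_self_left.mp hpq)
      refine ⟨s ++ [false], beta u, beta v, by rw [co_concat, hs]; rfl, ?_⟩
      rw [← beta_append, huv, beta_christoffel _ _ (by omega)]
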